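/- Let θ∈Aut G=W(Γ,o) and let v be a vertex. If θ(⟨[v]_s⟩)⊆⟨[v]_s⟩, then θ(⟨[v]_s⟩)=⟨[v]_s⟩. -/

import Mathlib

/-!
The subgroup `A = ⟨[v]ₛ⟩` embeds in the abelianization of `G = W(Γ,o)`: the vertices of `[v]ₛ`
are pairwise adjacent, so `A` is abelian, and killing all the other generators defines a retraction
`G → A`, which factors through `Gᵃᵇ`.

Let `θ'` be the automorphism of `Gᵃᵇ` induced by `θ` and `B` the image of `A`. Then `θ'(B) ⊆ B`,
and `θ'` induces a surjective endomorphism of the finitely generated abelian group `Gᵃᵇ/B`.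
Such groups are Hopfian, so this endomorphism is injective, which says that `θ'(m) ∈ B` forces
`m ∈ B`; hence `θ'(B) = B` (`le_map_of_map_le`). So each `a ∈ A` agrees in `Gᵃᵇ` with `θ(a')` for
some `a' ∈ A`. Both elements lie in `A`, which embeds in `Gᵃᵇ`, so `a = θ(a')`.
-/


/- Graph products of cyclic groups W(Γ,o), following Corredor–Gutierrez.
   A label `o v = 0` means the vertex group is infinite cyclic; otherwise
   `o v` is a prime power > 1 and the vertex group is cyclic of order `o v`. -/

namespace GP

variable {V : Type}

/-- Relations of the graph product of cyclic groups determined by `(Γ, o)`. -/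
def rels (Γ : SimpleGraph V) (o : V → ℕ) : Set (FreeGroup V) :=
  {r | (∃ v : V, o v ≠ 0 ∧ r = FreeGroup.of v ^ (o v)) ∨
    (∃ x y : V, Γ.Adj x y ∧
      r = FreeGroup.of x * FreeGroup.of y * (FreeGroup.of x)⁻¹ * (FreeGroup.of y)⁻¹)}

/-- The graph product `W(Γ,o)`. -/
abbrev W (Γ : SimpleGraph V) (o : V → ℕ) : Type := PresentedGroup (rels Γ o)

/-- `o` labels each vertex with a prime power `> 1` or `0` (standing for `∞`). -/
def IsLabeling (o : V → ℕ) : Prop := ∀ v, o v = 0 ∨ IsPrimePow (o v)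

variable (Γ : SimpleGraph V) (o : V → ℕ)

/-- The generator of `W(Γ,o)` corresponding to a vertex. -/
def gen (v : V) : W Γ o := PresentedGroup.of v

/-- Evaluation of a word `v₁^{n₁} ⋯ v_p^{n_p}` in the group. -/
def evalWord (l : List (V × ℤ)) : W Γ o := (l.map fun p => gen Γ o p.1 ^ p.2).prod

/-- The length `Σ |n_i|` of a word. -/
def wordLen (l : List (V × ℤ)) : ℕ := (l.map fun p => p.2.natAbs).sum

/-- The length of a group element: the minimal length of a word representing it. -/
noncomputable def len (g : W Γ o) : ℕ := sInf (wordLen '' {l | evalWord Γ o l = g})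

/-- `l` is a reduced word for `g`: it represents `g` and has minimal length. -/
def IsReducedWord (l : List (V × ℤ)) (g : W Γ o) : Prop :=
  evalWord Γ o l = g ∧ ∀ l' : List (V × ℤ), evalWord Γ o l' = g → wordLen l ≤ wordLen l'

/-- The support of `g`: the vertices occurring in a reduced word for `g`. -/
def supp (g : W Γ o) : Set V :=
  {v | ∃ l, IsReducedWord Γ o l g ∧ v ∈ l.map Prod.fst}

/-- `g` is cyclically reduced. -/
def IsCR (g : W Γ o) : Prop :=
  ∀ v : V, supp Γ o g ⊆ supp Γ o (gen Γ o v * g * (gen Γ o v)⁻¹) ∧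
    supp Γ o g ⊆ supp Γ o ((gen Γ o v)⁻¹ * g * gen Γ o v)

/-- The cyclic support of `g`: the support of the cyclically reduced part of `g`. -/
def csupp (g : W Γ o) : Set V :=
  {x | ∃ w u : W Γ o, g = w * u * w⁻¹ ∧ IsCR Γ o u ∧ x ∈ supp Γ o u}

/-- The star `v★ = {v} ∪ lk v` of a vertex. -/
def vstar (v : V) : Set V := insert v (Γ.neighborSet v)

/-- The domination order: `x ≤ y` iff `lk x ⊆ y★`. -/
def vle (x y : V) : Prop := Γ.neighborSet x ⊆ vstar Γ y

/-- Strong domination: `x ≤ₛ y` iff `x★ ⊆ y★`. -/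
def vles (x y : V) : Prop := vstar Γ x ⊆ vstar Γ y

/-- The `∼`-class `[v]` of a vertex. -/
def simClass (v : V) : Set V := {x | vle Γ v x ∧ vle Γ x v}

/-- The `∼ₛ`-class `[v]ₛ` of a vertex. -/
def sClass (v : V) : Set V := {x | vles Γ v x ∧ vles Γ x v}

/-- The vertex set of `Γ_v`, the full subgraph on the vertices dominating `v`. -/
def GammaSet (v : V) : Set V := {x | vle Γ v x}

/-- The link of a set of vertices: `⋂_{s ∈ S} lk s`. -/
def lkSet (S : Set V) : Set V := {x | ∀ s ∈ S, Γ.Adj s x}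

/-- `K` is (the vertex set of) a connected component of the full subgraph of `Λ` on `s`. -/
def IsCompOf (Λ : SimpleGraph V) (s K : Set V) : Prop :=
  ∃ c : (SimpleGraph.induce s Λ).ConnectedComponent, K = Subtype.val '' c.supp

/-- The subgroup `⟨S⟩` generated by a set of vertices. -/
def genSubgroup (S : Set V) : Subgroup (W Γ o) := Subgroup.closure (gen Γ o '' S)

/-- `r` is a root of `g`: `g = r^n` with `n ≥ 1` maximal (and `n < o(g)` when
`g` has finite order). -/
def IsRootOf (r g : W Γ o) : Prop :=
  ∃ n : ℕ, 1 ≤ n ∧ g = r ^ n ∧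
    (orderOf g = 0 → ∀ (r' : W Γ o) (m : ℕ), 1 ≤ m → g = r' ^ m → m ≤ n) ∧
    (orderOf g ≠ 0 → n < orderOf g ∧
      ∀ (r' : W Γ o) (m : ℕ), 1 ≤ m → m < orderOf g → g = r' ^ m → m ≤ n)

/-- The rank of `g`: the number of vertices of the labeled graph `K(u)`, i.e. the
number of connected components of `⟨csupp g⟩ᶜ` plus `|lk (csupp g)|`. -/
noncomputable def rk (g : W Γ o) : ℕ :=
  Nat.card ((SimpleGraph.induce (csupp Γ o g) Γᶜ).ConnectedComponent) +
    (lkSet Γ (csupp Γ o g)).ncard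

/-- `u = z₁^{m₁} ⋯ z_s^{m_s}` is a basic form of the cyclically reduced element `u`:
a commuting product of powers of roots whose supports are the connected components of
`⟨supp u⟩ᶜ`. -/
def IsBasicForm (u : W Γ o) (s : ℕ) (z : Fin s → W Γ o) (m : Fin s → ℕ) : Prop :=
  IsCR Γ o u ∧
  (∀ i j, Commute (z i) (z j)) ∧
  u = (List.ofFn fun i => z i ^ m i).prod ∧
  (∀ i, 1 ≤ m i) ∧
  (∀ i, IsRootOf Γ o (z i) (z i ^ m i)) ∧
  (∀ i, IsCompOf Γᶜ (supp Γ o u) (supp Γ o (z i))) ∧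
  (∀ i j, i ≠ j → Disjoint (supp Γ o (z i)) (supp Γ o (z j))) ∧
  supp Γ o u = ⋃ i, supp Γ o (z i)

/-- Labeled graph automorphisms. -/
def IsLabeledGraphAuto (θ : MulAut (W Γ o)) : Prop :=
  ∃ γ : Γ ≃g Γ, (∀ v, o (γ v) = o v) ∧ ∀ v, θ (gen Γ o v) = gen Γ o (γ v)

/-- Factor automorphisms. -/
def IsFactorAuto (θ : MulAut (W Γ o)) : Prop :=
  ∃ (v : V) (m : ℤ),
    ((o v = 0 ∧ m = -1) ∨ (o v ≠ 0 ∧ m ≠ 1 ∧ Int.gcd m (o v) = 1)) ∧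
    θ (gen Γ o v) = gen Γ o v ^ m ∧ ∀ z, z ≠ v → θ (gen Γ o z) = gen Γ o z

/-- The map `x ↦ x y^q`, fixing all other vertices, extends to an endomorphism. -/
def TransvectionExtends (x y : V) (q : ℕ) : Prop :=
  ∃ e : W Γ o →* W Γ o, e (gen Γ o x) = gen Γ o x * gen Γ o y ^ q ∧
    ∀ z, z ≠ x → e (gen Γ o z) = gen Γ o z

/-- `θ` is the dominated transvection `τ_{x,y}^q` with `q ≥ 1` minimal well-defined. -/
def IsDTransvOn (x y : V) (θ : MulAut (W Γ o)) : Prop :=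
  x ≠ y ∧ ∃ q : ℕ, 1 ≤ q ∧ TransvectionExtends Γ o x y q ∧
    (∀ q' : ℕ, 1 ≤ q' → TransvectionExtends Γ o x y q' → q ≤ q') ∧
    θ (gen Γ o x) = gen Γ o x * gen Γ o y ^ q ∧
    ∀ z, z ≠ x → θ (gen Γ o z) = gen Γ o z

/-- Well-defined dominated transvections. -/
def IsDominatedTransvection (θ : MulAut (W Γ o)) : Prop := ∃ x y, IsDTransvOn Γ o x y θ

/-- `★`-transvections: dominated transvections with `x` adjacent to `y`. -/
def IsStarTransvection (θ : MulAut (W Γ o)) : Prop :=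
  ∃ x y, Γ.Adj x y ∧ IsDTransvOn Γ o x y θ

/-- Partial conjugations `σ_{K,v}`. -/
def IsPartialConj (θ : MulAut (W Γ o)) : Prop :=
  ∃ (v : V) (K : Set V), IsCompOf Γ ((vstar Γ v)ᶜ) K ∧
    (∀ x ∈ K, θ (gen Γ o x) = gen Γ o v * gen Γ o x * (gen Γ o v)⁻¹) ∧
    (∀ x, x ∉ K → θ (gen Γ o x) = gen Γ o x)

/-- The generating set `𝒢` of elementary automorphisms. -/
def ElemSet : Set (MulAut (W Γ o)) :=
  {θ | IsLabeledGraphAuto Γ o θ ∨ IsFactorAuto Γ o θ ∨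
    IsDominatedTransvection Γ o θ ∨ IsPartialConj Γ o θ}

/-- The subgroup `E(G)` generated by the elementary automorphisms. -/
def EGroup : Subgroup (MulAut (W Γ o)) := Subgroup.closure (ElemSet Γ o)

/-- The generating set `𝒢★`. -/
def GStarSet : Set (MulAut (W Γ o)) :=
  {θ | IsLabeledGraphAuto Γ o θ ∨ IsFactorAuto Γ o θ ∨
    IsStarTransvection Γ o θ ∨ IsPartialConj Γ o θ}

/-- `θ` is simple: `v ∈ csupp θ(v)` and `⟨csupp θ(v)⟩ᶜ` is connected, for all `v`. -/
def IsSimple (θ : MulAut (W Γ o)) : Prop :=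
  ∀ v : V, v ∈ csupp Γ o (θ (gen Γ o v)) ∧
    (SimpleGraph.induce (csupp Γ o (θ (gen Γ o v))) Γᶜ).Connected

/-- `θ` is quasi-simple: `⟨csupp θ(v)⟩ᶜ` is connected and `csupp θ(v) ⊆ Γ_v`, for all `v`. -/
def IsQuasiSimple (θ : MulAut (W Γ o)) : Prop :=
  ∀ v : V, (SimpleGraph.induce (csupp Γ o (θ (gen Γ o v))) Γᶜ).Connected ∧
    csupp Γ o (θ (gen Γ o v)) ⊆ GammaSet Γ v

/-- `θ` is conjugating: `θ(x)` is conjugate to `x` for all vertices `x`. -/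
def IsConjugating (θ : MulAut (W Γ o)) : Prop :=
  ∀ x : V, ∃ w : W Γ o, θ (gen Γ o x) = w * gen Γ o x * w⁻¹

/-- `Δ` is a maximal complete subgraph (maximal clique) of `Γ`. -/
def IsMaxClique (Δ : Set V) : Prop :=
  Γ.IsClique Δ ∧ ∀ Δ' : Set V, Γ.IsClique Δ' → Δ ⊆ Δ' → Δ' = Δ

/-- Evaluation of a single letter `v^{±1}`. -/
def evalLetter (x : V × Bool) : W Γ o := if x.2 then gen Γ o x.1 else (gen Γ o x.1)⁻¹

/-- Evaluation of a word of letters. -/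
def evalL (l : List (V × Bool)) : W Γ o := (l.map (evalLetter Γ o)).prod

/-- `x` is a first letter of `g`, i.e. `g = x g'` reduced. -/
def IsFirstLetter (x : V × Bool) (g : W Γ o) : Prop :=
  len Γ o ((evalLetter Γ o x)⁻¹ * g) + 1 = len Γ o g

/-- `x` is a last letter of `g`, i.e. `g = g' x` reduced. -/
def IsLastLetter (x : V × Bool) (g : W Γ o) : Prop :=
  len Γ o (g * (evalLetter Γ o x)⁻¹) + 1 = len Γ o g

/-- A single conjugation step `a ↦ x a x⁻¹` is of reduction type `k ∈ {1,2,3,4}`. -/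
def StepType (k : ℕ) (x : V × Bool) (a : W Γ o) : Prop :=
  match k with
  | 1 => ∀ s ∈ supp Γ o a, Commute (gen Γ o s) (gen Γ o x.1)
  | 2 => IsFirstLetter Γ o (x.1, !x.2) a ∧
      ¬ IsLastLetter Γ o x (evalLetter Γ o x * a)
  | 3 => IsLastLetter Γ o x a ∧
      ¬ IsFirstLetter Γ o (x.1, !x.2) (a * (evalLetter Γ o x)⁻¹)
  | 4 => len Γ o (evalLetter Γ o x * a * (evalLetter Γ o x)⁻¹) = len Γ o a + 2
  | _ => False

/-- Conjugation by a letter. -/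
def conjLetter (x : V × Bool) (a : W Γ o) : W Γ o :=
  evalLetter Γ o x * a * (evalLetter Γ o x)⁻¹

/-- Apply a list of letters (given right-to-left) by successive conjugation. -/
def applyRev : List (V × Bool) → W Γ o → W Γ o
  | [], a => a
  | x :: xs, a => applyRev xs (conjLetter Γ o x a)

/-- Each successive conjugation step by the letters (listed right-to-left) has type `k`. -/
def StepsRev (k : ℕ) : List (V × Bool) → W Γ o → Prop
  | [], _ => True
  | x :: xs, a => StepType Γ o k x a ∧ StepsRev k xs (conjLetter Γ o x a)

/-- `w₄w₃w₂w₁` (as letter words `l4 l3 l2 l1`) is a reduction decomposition of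
`w = w₄w₃w₂w₁` relative to the cyclically reduced element `u`: the concatenation is
reduced, computing `wuw⁻¹` letter by letter from the right each letter of `w_k` effects
a reduction of type `k`, and `w₁, w₂, w₃` pairwise commute. -/
def IsReductionDecomp (u : W Γ o) (l4 l3 l2 l1 : List (V × Bool)) : Prop :=
  (l4 ++ l3 ++ l2 ++ l1).length = len Γ o (evalL Γ o (l4 ++ l3 ++ l2 ++ l1)) ∧
  StepsRev Γ o 1 l1.reverse u ∧
  StepsRev Γ o 2 l2.reverse (applyRev Γ o l1.reverse u) ∧
  StepsRev Γ o 3 l3.reverse (applyRev Γ o (l2 ++ l1).reverse u) ∧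
  StepsRev Γ o 4 l4.reverse (applyRev Γ o (l3 ++ l2 ++ l1).reverse u) ∧
  Commute (evalL Γ o l1) (evalL Γ o l2) ∧
  Commute (evalL Γ o l1) (evalL Γ o l3) ∧
  Commute (evalL Γ o l2) (evalL Γ o l3)

/-- `b` has no initial letter among the vertices of `S`. -/
def NoInitialLetterIn (S : Set V) (b : W Γ o) : Prop :=
  ∀ x ∈ S, ∀ e : Bool, ¬ IsFirstLetter Γ o (x, e) b

/-- `g = h v^{n₁} b₁ ⋯ v^{n_k} b_k` is a normal form for the amalgamated decomposition
`W(Γ) = W(v★) ∗_H W(Γ∖v)`, `H = ⟨lk v⟩`: `h ∈ H`, each `b_i ∈ W(Γ∖v)` has no initial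
letter in `H`, and only `h`, `n₁` or `b_k` may be trivial. -/
def IsNormalForm (v : V) (g h : W Γ o) (k : ℕ)
    (n : Fin k → ℤ) (b : Fin k → W Γ o) : Prop :=
  h ∈ genSubgroup Γ o (Γ.neighborSet v) ∧
  (∀ i, b i ∈ genSubgroup Γ o ({v}ᶜ : Set V)) ∧
  (∀ i, NoInitialLetterIn Γ o (Γ.neighborSet v) (b i)) ∧
  (∀ i : Fin k, (i : ℕ) ≠ 0 → n i ≠ 0) ∧
  (∀ i : Fin k, (i : ℕ) + 1 ≠ k → b i ≠ 1) ∧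
  g = h * (List.ofFn fun i => gen Γ o v ^ n i * b i).prod

end GP

namespace GP

/-- An automorphism of a finitely generated abelian group cannot map a subgroup properly into
itself, since the quotient by the subgroup is Hopfian. -/
theorem le_map_of_map_le_add {M : Type*} [AddCommGroup M] [Module.Finite ℤ M]
    (f : M →ₗ[ℤ] M) (hf : Function.Surjective f) (B : Submodule ℤ M) (hB : B.map f ≤ B) :
    B ≤ B.map f := by
  have hB' : B ≤ B.comap f := Submodule.map_le_iff_le_comap.mp hB
  have hsurj : Function.Surjective (B.mapQ B f hB') := by
    intro y
    obtain ⟨y, rfl⟩ := B.mkQ_surjective y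
    obtain ⟨x, rfl⟩ := hf y
    exact ⟨B.mkQ x, by simp⟩
  have hinj := OrzechProperty.injective_of_surjective_endomorphism _ hsurj
  intro b hb
  obtain ⟨m, rfl⟩ := hf b
  refine ⟨m, ?_, rfl⟩
  have : B.mkQ m = 0 := hinj (by simpa using hb)
  simpa using this

theorem le_map_of_map_le {M : Type*} [CommGroup M] [Group.FG M]
    (f : M ≃* M) (B : Subgroup M) (hB : B.map f.toMonoidHom ≤ B) :
    B ≤ B.map f.toMonoidHom := by
  have : Module.Finite ℤ (Additive M) := Module.Finite.iff_addGroup_fg.mpr inferInstance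
  have key := le_map_of_map_le_add (M := Additive M)
    (MonoidHom.toAdditive f.toMonoidHom).toIntLinearMap f.surjective
    (AddSubgroup.toIntSubmodule (Subgroup.toAddSubgroup B))
    (by
      rintro _ ⟨x, hx, rfl⟩
      exact hB ⟨x.toMul, hx, rfl⟩)
  intro b hb
  obtain ⟨m, hm, h⟩ := key (x := Additive.ofMul b) hb
  exact ⟨m.toMul, hm, h⟩

theorem gen_commute_of_adj {V : Type} {Γ : SimpleGraph V} (o : V → ℕ) {x y : V}
    (h : Γ.Adj x y) : gen Γ o x * gen Γ o y = gen Γ o y * gen Γ o x := by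
  have h1 : PresentedGroup.mk (rels Γ o) (FreeGroup.of x * FreeGroup.of y *
      (FreeGroup.of x)⁻¹ * (FreeGroup.of y)⁻¹) = 1 :=
    PresentedGroup.one_of_mem (Or.inr ⟨x, y, h, rfl⟩)
  simp only [map_mul, map_inv] at h1
  rw [mul_inv_eq_one, mul_inv_eq_iff_eq_mul] at h1
  exact h1

theorem gen_pow {V : Type} (Γ : SimpleGraph V) (o : V → ℕ) (x : V) : gen Γ o x ^ o x = 1 := by
  by_cases hx : o x = 0
  · simp [hx]
  · have h1 : PresentedGroup.mk (rels Γ o) (FreeGroup.of x ^ o x) = 1 :=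
      PresentedGroup.one_of_mem (Or.inl ⟨x, hx, rfl⟩)
    rw [map_pow] at h1
    exact h1

/-- A subgroup generated by a clique embeds in the abelianization: killing the generators outside
`S` is a retraction of `W(Γ,o)` onto the abelian group `⟨S⟩`. -/
theorem abelianization_injOn {V : Type} (Γ : SimpleGraph V) (o : V → ℕ) {S : Set V}
    (hS : Γ.IsClique S) :
    Set.InjOn (Abelianization.of : W Γ o →* _) (genSubgroup Γ o S : Set (W Γ o)) := by
  classical
  have hcomm : IsMulCommutative (genSubgroup Γ o S) := Subgroup.isMulCommutative_closure (by
    rintro _ ⟨x, hx, rfl⟩ _ ⟨y, hy, rfl⟩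
    by_cases hxy : x = y
    · rw [hxy]
    · exact gen_commute_of_adj o (hS hx hy hxy))
  letI : CommGroup (genSubgroup Γ o S) :=
    { (genSubgroup Γ o S).toGroup with mul_comm := hcomm.is_comm.comm }
  let f : V → genSubgroup Γ o S := fun x =>
    if hx : x ∈ S then ⟨gen Γ o x, Subgroup.subset_closure ⟨x, hx, rfl⟩⟩ else 1
  have hf : ∀ r ∈ rels Γ o, FreeGroup.lift f r = 1 := by
    rintro _ (⟨x, -, rfl⟩ | ⟨x, y, -, rfl⟩)
    · rw [map_pow, FreeGroup.lift_apply_of]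
      by_cases hx : x ∈ S
      · apply Subtype.ext
        simp only [f, hx, dif_pos]
        exact gen_pow Γ o x
      · simp only [f, hx, dif_neg, not_false_eq_true]
        exact one_pow _
    · simp only [map_mul, map_inv]
      rw [mul_right_comm, mul_inv_cancel_right, mul_inv_cancel]
  let r : W Γ o →* genSubgroup Γ o S := PresentedGroup.toGroup hf
  have hr : ∀ a ∈ genSubgroup Γ o S, ((r a : genSubgroup Γ o S) : W Γ o) = a := by
    intro a ha
    have : Set.EqOn ((genSubgroup Γ o S).subtype.comp r) (MonoidHom.id _)
        (Subgroup.closure (gen Γ o '' S)) := by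
      apply MonoidHom.eqOn_closure
      rintro _ ⟨x, hx, rfl⟩
      have : r (gen Γ o x) = f x := PresentedGroup.toGroup.of hf
      simp [this, f, hx]
    exact this ha
  intro a ha b hb hab
  have h2 : r a = r b := by
    have := congrArg (Abelianization.lift r) hab
    simpa only [Abelianization.lift_apply_of] using this
  rw [← hr a ha, ← hr b hb, h2]

theorem sClass_isClique {V : Type} (Γ : SimpleGraph V) (v : V) : Γ.IsClique (sClass Γ v) := by
  intro x hx y hy hxy
  have : y ∈ vstar Γ x := hx.1 (hy.2 (Set.mem_insert _ _))
  rcases this with h | h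
  · exact absurd h.symm hxy
  · exact h

end GP

open GP in
/-- If `θ(⟨[v]ₛ⟩) ⊆ ⟨[v]ₛ⟩` then `θ(⟨[v]ₛ⟩) = ⟨[v]ₛ⟩`. -/
theorem sClass_subgroup_invariant (V : Type) [Fintype V] [DecidableEq V]
    (Γ : SimpleGraph V) (o : V → ℕ) (ho : IsLabeling o)
    (θ : MulAut (W Γ o)) (v : V)
    (h : Subgroup.map (MulEquiv.toMonoidHom θ) (genSubgroup Γ o (sClass Γ v)) ≤
      genSubgroup Γ o (sClass Γ v)) :
    Subgroup.map (MulEquiv.toMonoidHom θ) (genSubgroup Γ o (sClass Γ v)) =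
      genSubgroup Γ o (sClass Γ v) := by
  refine le_antisymm h fun a ha => ?_
  have : Group.FG (W Γ o) :=
    Group.fg_of_surjective (f := PresentedGroup.mk (rels Γ o)) (PresentedGroup.mk_surjective _)
  have : Group.FG (Abelianization (W Γ o)) :=
    Group.fg_of_surjective (f := Abelianization.of) (QuotientGroup.mk'_surjective _)
  have key := le_map_of_map_le (MulEquiv.abelianizationCongr θ)
    ((genSubgroup Γ o (sClass Γ v)).map Abelianization.of) (by
      rintro _ ⟨_, ⟨x, hx, rfl⟩, rfl⟩
      exact ⟨θ x, h ⟨x, hx, rfl⟩, rfl⟩)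
  obtain ⟨_, ⟨a', ha', rfl⟩, haa'⟩ := key ⟨a, ha, rfl⟩
  exact ⟨a', ha', abelianization_injOn Γ o (sClass_isClique Γ v) (h ⟨a', ha', rfl⟩) ha haa'⟩
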